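/- Let I ⊆ ℝ be a nondegenerate interval, n ≥ 2, let ω be an n-dimensional positive Chebyshev system over I, and let T ⊆ ℝ₊ be a nonempty set. Then a function f : I → ℝ is ((t_1,…,t_n), ω)-convex on I for all t_1,…,t_n ∈ T if and only if, for all t,s ∈ T and all k ∈ {1,…,n}, the function f is ((t𝟏_k, s𝟏_{n−k}), ω)-convex on I. -/

import Mathlib

/-- `Phi ω x` is the determinant `det(ωᵢ(xⱼ))` of an `n`-tuple of functions
evaluated at an `n`-tuple of points. -/
noncomputable def Phi {n : ℕ} (ω : Fin n → ℝ → ℝ) (x : Fin n → ℝ) : ℝ :=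
  (Matrix.of fun i j => ω i (x j)).det

/-- `ω` is an `n`-dimensional positive Chebyshev system over `H`:
`Phi ω` is positive on all strictly increasing `n`-tuples of elements of `H`. -/
def IsPosChebyshev {n : ℕ} (ω : Fin n → ℝ → ℝ) (H : Set ℝ) : Prop :=
  ∀ x : Fin n → ℝ, StrictMono x → (∀ j, x j ∈ H) → 0 < Phi ω x

/-- The partial sum `t₁ + ⋯ + tⱼ` (empty for `j = 0`, everything for `j = n`). -/
noncomputable def psum {n : ℕ} (t : Fin n → ℝ) (j : Fin (n + 1)) : ℝ :=
  ∑ i ∈ Finset.univ.filter (fun i : Fin n => (i : ℕ) < (j : ℕ)), t i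

/-- `f` is `(t,ω)`-convex on `J`:
`Φ_{(ω,f)}(x, x+t₁h, x+(t₁+t₂)h, …, x+(t₁+⋯+tₙ)h) ≥ 0`
for all `x ∈ J` and `h > 0` with `x+(t₁+⋯+tₙ)h ∈ J`. -/
def TOmegaConvexOn {n : ℕ} (ω : Fin n → ℝ → ℝ) (t : Fin n → ℝ) (J : Set ℝ) (f : ℝ → ℝ) : Prop :=
  ∀ x ∈ J, ∀ h : ℝ, 0 < h → x + psum t (Fin.last n) * h ∈ J →
    0 ≤ Phi (Fin.snoc ω f) (fun j => x + psum t j * h)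

open Finset in
lemma psum_eq_range {n : ℕ} (τ : ℕ → ℝ) (j : Fin (n + 1)) :
    psum (fun i : Fin n => τ i) j = ∑ i ∈ range (j : ℕ), τ i := by
  unfold psum
  rw [Finset.sum_filter, Fin.sum_univ_eq_sum_range (fun i => if i < (j : ℕ) then τ i else 0) n,
    ← Finset.sum_filter]
  congr 1
  ext i
  simp only [mem_filter, mem_range]
  have := j.is_lt
  omega

/-- Expansion along the last row. -/
lemma Phi_snoc_expand {n : ℕ} (ω : Fin n → ℝ → ℝ) (f : ℝ → ℝ) (x : Fin (n + 1) → ℝ) :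
    Phi (Fin.snoc ω f : Fin (n + 1) → ℝ → ℝ) x =
      ∑ j : Fin (n + 1), (-1) ^ (n + (j : ℕ)) * f (x j) * Phi ω (fun k => x (j.succAbove k)) := by
  unfold Phi
  rw [Matrix.det_succ_row _ (Fin.last n)]
  refine Finset.sum_congr rfl fun j _ => ?_
  have hsub : (Matrix.of fun i j => (Fin.snoc ω f : Fin (n + 1) → ℝ → ℝ) i (x j)).submatrix
      (Fin.last n).succAbove j.succAbove = Matrix.of fun i k => ω i (x (j.succAbove k)) := by
    ext i k
    simp
  rw [hsub]
  simp

lemma Phi_snoc_self {n : ℕ} (ω : Fin n → ℝ → ℝ) (i : Fin n) (x : Fin (n + 1) → ℝ) :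
    Phi (Fin.snoc ω (ω i) : Fin (n + 1) → ℝ → ℝ) x = 0 := by
  unfold Phi
  apply Matrix.det_zero_of_row_eq (i := i.castSucc) (j := Fin.last n) (Fin.castSucc_lt_last i).ne
  ext k
  simp

lemma Phi_snoc_sub {n : ℕ} (ω : Fin n → ℝ → ℝ) (c : Fin n → ℝ) (f : ℝ → ℝ)
    (x : Fin (n + 1) → ℝ) :
    Phi (Fin.snoc ω (fun y => f y - ∑ i, c i * ω i y) : Fin (n + 1) → ℝ → ℝ) x =
      Phi (Fin.snoc ω f : Fin (n + 1) → ℝ → ℝ) x := by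
  have h : ∀ i, c i * ∑ j : Fin (n + 1), (-1) ^ (n + (j : ℕ)) * ω i (x j) *
      Phi ω (fun k => x (j.succAbove k)) = 0 := fun i => by
    rw [← Phi_snoc_expand, Phi_snoc_self, mul_zero]
  have h2 := Finset.sum_eq_zero (s := Finset.univ) (fun i _ => h i)
  simp only [Finset.mul_sum] at h2
  rw [Finset.sum_comm] at h2
  rw [Phi_snoc_expand, Phi_snoc_expand, ← sub_eq_zero, ← Finset.sum_sub_distrib,
    ← neg_eq_zero, ← Finset.sum_neg_distrib, ← h2]
  refine Finset.sum_congr rfl fun j _ => ?_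
  have : ∑ i, c i * ((-1) ^ (n + (j : ℕ)) * ω i (x j) * Phi ω (fun k => x (j.succAbove k))) =
      (∑ i, c i * ω i (x j)) * ((-1) ^ (n + (j : ℕ)) * Phi ω (fun k => x (j.succAbove k))) := by
    rw [Finset.sum_mul]
    exact Finset.sum_congr rfl fun i _ => by ring
  rw [this]
  ring

/-- If `g` vanishes at the interior points, only the two extreme terms survive. -/
lemma Phi_two_term {n : ℕ} (hn : 1 ≤ n) (ω : Fin n → ℝ → ℝ) (g : ℝ → ℝ) (x : Fin (n + 1) → ℝ)
    (hg : ∀ j, j ≠ 0 → j ≠ Fin.last n → g (x j) = 0) :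
    Phi (Fin.snoc ω g : Fin (n + 1) → ℝ → ℝ) x =
      ((-1) ^ n * g (x 0)) * Phi ω (fun k => x k.succ) +
        g (x (Fin.last n)) * Phi ω (fun k => x k.castSucc) := by
  have h0 : (0 : Fin (n + 1)) ≠ Fin.last n := by
    intro h
    have := congrArg Fin.val h
    simp at this
    omega
  rw [Phi_snoc_expand, Fintype.sum_eq_add 0 (Fin.last n) h0]
  · simp [← two_mul]
  · rintro j ⟨h1, h2⟩
    rw [hg j h1 h2]
    ring

lemma exists_interp {n : ℕ} (ω : Fin n → ℝ → ℝ) (f : ℝ → ℝ) (z : Fin n → ℝ)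
    (hz : 0 < Phi ω z) : ∃ c : Fin n → ℝ, ∀ k, f (z k) - ∑ i, c i * ω i (z k) = 0 := by
  let A : Matrix (Fin n) (Fin n) ℝ := Matrix.of fun i j => ω i (z j)
  have hA : IsUnit A.det := by
    have : A.det = Phi ω z := rfl
    rw [this]
    exact isUnit_iff_ne_zero.mpr hz.ne'
  refine ⟨Matrix.vecMul (fun k => f (z k)) A⁻¹, fun k => ?_⟩
  have h : Matrix.vecMul (Matrix.vecMul (fun k => f (z k)) A⁻¹) A = fun k => f (z k) := by
    rw [Matrix.vecMul_vecMul, Matrix.nonsing_inv_mul _ hA, Matrix.vecMul_one]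
  have hk := congrFun h k
  rw [sub_eq_zero, ← hk]
  rfl

/-- Nonnegativity on consecutive windows implies nonnegativity on all increasing subtuples. -/
lemma chain_nonneg {n : ℕ} (hn : 2 ≤ n) (I : Set ℝ) (ω : Fin n → ℝ → ℝ) (hω : IsPosChebyshev ω I)
    (f : ℝ → ℝ) (y : ℕ → ℝ) (hy : StrictMono y) (M : ℕ) (hyI : ∀ q ≤ M, y q ∈ I)
    (hw : ∀ i, i + n ≤ M →
      0 ≤ Phi (Fin.snoc ω f : Fin (n + 1) → ℝ → ℝ) (fun j => y (i + (j : ℕ)))) :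
    ∀ (d : ℕ) (g : Fin (n + 1) → ℕ), StrictMono g → g (Fin.last n) ≤ M →
      g (Fin.last n) - g 0 ≤ d →
      0 ≤ Phi (Fin.snoc ω f : Fin (n + 1) → ℝ → ℝ) (fun j => y (g j)) := by
  have hlow : ∀ g : Fin (n + 1) → ℕ, StrictMono g → ∀ (m : ℕ) (hm : m < n + 1),
      g 0 + m ≤ g ⟨m, hm⟩ := by
    intro g hg m
    induction m with
    | zero => intro hm; exact le_rfl
    | succ m ih =>
      intro hm
      have h1 := ih (by omega)
      have h2 : g ⟨m, by omega⟩ < g ⟨m + 1, hm⟩ := hg (by simp)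
      omega
  intro d
  induction d with
  | zero =>
    intro g hg _ hd
    have := hlow g hg n (by omega)
    have e : (⟨n, by omega⟩ : Fin (n + 1)) = Fin.last n := rfl
    rw [e] at this
    omega
  | succ d ih =>
    intro g hg hM hd
    have hgl := hlow g hg n (by omega)
    have e : (⟨n, by omega⟩ : Fin (n + 1)) = Fin.last n := rfl
    rw [e] at hgl
    by_cases hwin : g (Fin.last n) = g 0 + n
    · have hge : ∀ j, g j = g 0 + (j : ℕ) := by
        have hup : ∀ m (hm : m ≤ n), g ⟨n - m, by omega⟩ + m ≤ g 0 + n := by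
          intro m
          induction m with
          | zero => intro _; exact hwin.le
          | succ m ih2 =>
            intro hm
            have h1 := ih2 (by omega)
            have h2 : g ⟨n - (m + 1), by omega⟩ < g ⟨n - m, by omega⟩ := hg (by
              simp only [Fin.mk_lt_mk]; omega)
            omega
        intro j
        have h1 := hlow g hg j j.is_lt
        have h2 := hup (n - j) (by omega)
        have e2 : (⟨n - (n - (j : ℕ)), by omega⟩ : Fin (n + 1)) = j := by
          ext
          have := j.is_lt
          simp only
          omega
        rw [e2] at h2
        simp only [Fin.eta] at h1
        have := j.is_lt
        omega
      have : (fun j => y (g j)) = fun j : Fin (n + 1) => y (g 0 + (j : ℕ)) := by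
        funext j
        rw [hge j]
      rw [this]
      exact hw _ (by omega)
    · -- choose n intermediate points
      let s0 : Finset ℕ := (Finset.univ.filter
        (fun j : Fin (n + 1) => j ≠ 0 ∧ j ≠ Fin.last n)).image g
      have h0l : (0 : Fin (n + 1)) ≠ Fin.last n := by
        intro h
        have := congrArg Fin.val h
        simp at this
        omega
      have hs0 : s0 ⊆ Finset.Ioo (g 0) (g (Fin.last n)) := by
        intro m hm
        simp only [s0, Finset.mem_image, Finset.mem_filter, Finset.mem_univ, true_and] at hm
        obtain ⟨j, ⟨h1, h2⟩, rfl⟩ := hm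
        rw [Finset.mem_Ioo]
        exact ⟨hg (Fin.pos_of_ne_zero h1), hg (Fin.lt_last_iff_ne_last.mpr h2)⟩
      have hc0 : s0.card ≤ n := by
        refine Finset.card_image_le.trans ?_
        have : (Finset.univ.filter (fun j : Fin (n + 1) => j ≠ 0 ∧ j ≠ Fin.last n)) ⊆
            Finset.univ.erase 0 := by
          intro j hj
          simp only [Finset.mem_filter] at hj
          simp [hj.2.1]
        refine (Finset.card_le_card this).trans ?_
        simp
      obtain ⟨s, hs1, hs2, hsc⟩ := Finset.exists_subsuperset_card_eq hs0 hc0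
        (by rw [Nat.card_Ioo]; omega)
      let w : Fin n → ℕ := s.orderEmbOfFin hsc
      have hwm : StrictMono w := (s.orderEmbOfFin hsc).strictMono
      have hwI : ∀ k, g 0 < w k ∧ w k < g (Fin.last n) := fun k =>
        Finset.mem_Ioo.mp (hs2 (s.orderEmbOfFin_mem hsc k))
      have hws : ∀ j, j ≠ 0 → j ≠ Fin.last n → ∃ k, w k = g j := by
        intro j h1 h2
        have : g j ∈ s := hs1 (Finset.mem_image.mpr ⟨j, by simp [h1, h2], rfl⟩)
        rw [← Finset.mem_coe, ← Finset.range_orderEmbOfFin s hsc] at this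
        exact this
      have hωm : ∀ v : Fin n → ℕ, StrictMono v → (∀ k, v k ≤ M) →
          0 < Phi ω (fun k => y (v k)) := fun v hv hvM =>
        hω _ (hy.comp hv) (fun k => hyI _ (hvM k))
      have hwpos := hωm w hwm (fun k => ((hwI k).2.trans_le hM).le)
      obtain ⟨c, hc⟩ := exists_interp ω f (fun k => y (w k)) hwpos
      rw [← Phi_snoc_sub ω c]
      set F : ℝ → ℝ := fun y => f y - ∑ i, c i * ω i y with hF
      have hFw : ∀ k, F (y (w k)) = 0 := hc
      -- left tuple
      have hL : 0 ≤ (-1) ^ n * F (y (g 0)) := by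
        let gL : Fin (n + 1) → ℕ := Fin.cons (g 0) w
        have hgL : StrictMono gL := by
          intro a b hab
          induction b using Fin.cases with
          | zero => exact absurd hab (Fin.not_lt_zero a)
          | succ b =>
            induction a using Fin.cases with
            | zero => simpa [gL] using (hwI b).1
            | succ a => simpa [gL] using hwm (Fin.succ_lt_succ_iff.mp hab)
        have hlast : ∃ k, gL (Fin.last n) = w k := by
          obtain ⟨m, rfl⟩ : ∃ m, n = m + 1 := ⟨n - 1, by omega⟩
          exact ⟨Fin.last m, by rw [← Fin.succ_last]; simp [gL]⟩
        obtain ⟨k, hk⟩ := hlast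
        have hk2 := (hwI k).2
        have h00 : gL 0 = g 0 := by simp [gL]
        have hD := ih gL hgL (by omega) (by omega)
        rw [← Phi_snoc_sub ω c, ← hF, Phi_two_term (by omega)] at hD
        · rw [hk, hFw, zero_mul, add_zero, h00] at hD
          have : (fun k : Fin n => y (gL k.succ)) = fun k => y (w k) := by
            funext k; simp [gL]
          rw [this] at hD
          exact nonneg_of_mul_nonneg_left hD hwpos
        · intro j hj _
          obtain ⟨k, rfl⟩ := Fin.exists_succ_eq.mpr hj
          simpa [gL] using hFw k
      have hR : 0 ≤ F (y (g (Fin.last n))) := by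
        let gR : Fin (n + 1) → ℕ := Fin.snoc (α := fun _ => ℕ) w (g (Fin.last n))
        have hgRc : ∀ k : Fin n, gR k.castSucc = w k := fun k => by simp [gR]
        have hll : gR (Fin.last n) = g (Fin.last n) := by simp [gR]
        have hgR : StrictMono gR := by
          intro a b hab
          induction a using Fin.lastCases with
          | last => exact absurd hab (Fin.le_last b).not_gt
          | cast a =>
            induction b using Fin.lastCases with
            | last => rw [hgRc, hll]; exact (hwI a).2
            | cast b => rw [hgRc, hgRc]; exact hwm (Fin.castSucc_lt_castSucc_iff.mp hab)
        have hfst : ∃ k, gR 0 = w k := by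
          obtain ⟨m, rfl⟩ : ∃ m, n = m + 1 := ⟨n - 1, by omega⟩
          exact ⟨0, by rw [← Fin.castSucc_zero, hgRc]⟩
        obtain ⟨k, hk⟩ := hfst
        have hk2 := (hwI k).1
        have hD := ih gR hgR (by omega) (by omega)
        rw [← Phi_snoc_sub ω c, ← hF, Phi_two_term (by omega)] at hD
        · rw [hk, hFw, mul_zero, zero_mul, zero_add, hll] at hD
          have : (fun k : Fin n => y (gR k.castSucc)) = fun k => y (w k) := by
            funext k; rw [hgRc]
          rw [this] at hD
          exact nonneg_of_mul_nonneg_left hD hwpos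
        · intro j _ hj
          obtain ⟨k, rfl⟩ := Fin.exists_castSucc_eq.mpr hj
          rw [hgRc]; exact hFw k
      rw [Phi_two_term (by omega)]
      · have hle : ∀ j, g j ≤ M := fun j => (hg.monotone (Fin.le_last j)).trans hM
        have p1 := hωm (fun k => g k.succ) (hg.comp (Fin.strictMono_succ)) (fun k => hle _)
        have p2 := hωm (fun k => g k.castSucc) (hg.comp (Fin.strictMono_castSucc)) (fun k => hle _)
        exact add_nonneg (mul_nonneg hL p1.le) (mul_nonneg hR p2.le)
      · intro j h1 h2
        obtain ⟨k, hk⟩ := hws j h1 h2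
        rw [← hk]; exact hFw k

lemma block_sum (n : ℕ) (τ : ℕ → ℝ) (j : ℕ) :
    ∑ i ∈ Finset.range (n * j), τ (i / n) = n * ∑ i ∈ Finset.range j, τ i := by
  rcases Nat.eq_zero_or_pos n with rfl | hn
  · simp
  induction j with
  | zero => simp
  | succ j ih =>
    rw [Nat.mul_succ, Finset.sum_range_add, ih, Finset.sum_range_succ, mul_add]
    congr 1
    rw [Finset.sum_congr rfl (g := fun _ => τ j)]
    · simp
    · intro i hi
      rw [Nat.mul_add_div hn, Nat.div_eq_of_lt (Finset.mem_range.mp hi), add_zero]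

/-- **Corollary 5⁺⁺.** Let `n ≥ 2` and `T ⊆ ℝ₊` a nonempty set. Then `f` is
`((t₁,…,tₙ), ω)`-convex on `I` for all `t₁,…,tₙ ∈ T` if and only if, for all
`t, s ∈ T` and `k ∈ {1,…,n}`, the function `f` is `((t 𝟏_k, s 𝟏_{n−k}), ω)`-convex
on `I`. -/
theorem tOmegaConvex_forall_iff_twoBlock
    (n : ℕ) (hn : 2 ≤ n) (I : Set ℝ) (hI : I.OrdConnected)
    (hne : ∃ a ∈ I, ∃ b ∈ I, a < b)
    (ω : Fin n → ℝ → ℝ) (hω : IsPosChebyshev ω I)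
    (T : Set ℝ) (hT : ∀ s ∈ T, 0 < s) (hTne : T.Nonempty) (f : ℝ → ℝ) :
    (∀ t : Fin n → ℝ, (∀ i, t i ∈ T) → TOmegaConvexOn ω t I f) ↔
      (∀ t ∈ T, ∀ s ∈ T, ∀ k : ℕ, 1 ≤ k → k ≤ n →
        TOmegaConvexOn ω (fun j : Fin n => if (j : ℕ) < k then t else s) I f) := by
  constructor
  · intro h t ht s hs k _ _
    refine h _ fun i => ?_
    split_ifs <;> assumption
  · intro H t ht x hx h hh hxI
    obtain ⟨t0, ht0⟩ := hTne
    let τ : ℕ → ℝ := fun i => if hi : i < n then t ⟨i, hi⟩ else t0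
    have hτ : ∀ i, τ i ∈ T := by
      intro i
      dsimp only [τ]
      split_ifs
      · exact ht _
      · exact ht0
    have htτ : t = fun i : Fin n => τ i := by
      funext i
      simp [τ]
    have hn0 : (0 : ℝ) < n := by
      have : 0 < n := by omega
      exact_mod_cast this
    have hd : 0 < h / n := div_pos hh hn0
    let y : ℕ → ℝ := fun q => x + (∑ i ∈ Finset.range q, τ (i / n)) * (h / n)
    have hyadd : ∀ i j, y (i + j) =
        y i + (∑ l ∈ Finset.range j, τ ((i + l) / n)) * (h / n) := by
      intro i j
      simp only [y, Finset.sum_range_add]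
      ring
    have hy : StrictMono y := by
      refine strictMono_nat_of_lt_succ fun q => ?_
      rw [hyadd q 1]
      have := mul_pos (hT _ (hτ (q / n))) hd
      simpa using this
    have hyn : ∀ j : Fin (n + 1), y (n * (j : ℕ)) = x + psum t j * h := by
      intro j
      rw [htτ, psum_eq_range]
      simp only [y]
      rw [block_sum]
      field_simp
    have hy0 : y 0 = x := by simp [y]
    have hyM : y (n * n) ∈ I := by
      have := hyn (Fin.last n)
      rw [Fin.val_last] at this
      rw [this]
      exact hxI
    have hyI : ∀ q ≤ n * n, y q ∈ I := fun q hq =>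
      hI.out hx hyM ⟨by rw [← hy0]; exact hy.monotone (Nat.zero_le q), hy.monotone hq⟩
    have key := chain_nonneg hn I ω hω f y hy (n * n) hyI ?_ (n * n)
      (fun j => n * (j : ℕ)) (fun a b hab => Nat.mul_lt_mul_of_pos_left hab (by omega))
      (by simp) (by simp)
    · simpa only [hyn] using key
    · intro i hi
      have hb : i % n < n := Nat.mod_lt _ (by omega)
      have hdm := Nat.div_add_mod i n
      have hval : ∀ l < n, τ ((i + l) / n) =
          if l < n - i % n then τ (i / n) else τ (i / n + 1) := by
        intro l hl
        split_ifs with hc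
        · congr 1
          rw [← hdm, add_assoc, Nat.mul_add_div (by omega), Nat.div_eq_of_lt (a := i % n + l) (by omega),
            hdm, add_zero]
        · congr 1
          have e : i + l = n * (i / n + 1) + (i % n + l - n) := by
            rw [Nat.mul_add]; omega
          rw [e, Nat.mul_add_div (by omega), Nat.div_eq_of_lt (a := i % n + l - n) (by omega), add_zero]
      have hps : ∀ j : Fin (n + 1), y (i + (j : ℕ)) = y i + psum (fun j : Fin n =>
          if (j : ℕ) < n - i % n then τ (i / n) else τ (i / n + 1)) j * (h / n) := by
        intro j
        rw [hyadd, psum_eq_range (fun l => if l < n - i % n then τ (i / n) else τ (i / n + 1))]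
        congr 2
        refine Finset.sum_congr rfl fun l hl => hval l ?_
        have := Finset.mem_range.mp hl
        have := j.is_lt
        omega
      have := H _ (hτ (i / n)) _ (hτ (i / n + 1)) (n - i % n) (by omega) (by omega)
        (y i) (hyI i (by omega)) (h / n) hd (by
          rw [← hps (Fin.last n), Fin.val_last]
          exact hyI _ hi)
      simpa only [hps] using this
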